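/- For all M, A, P > 0 there exist T', C₁, C₂ > 0, depending only on M, A and P, with the following property. Let T, L > 0 and let F : ℝ × ℝ × ℝ × [0,T] → ℝ, written F = F(r,p,q,t), be continuously differentiable with ∂F/∂r > 0 everywhere, ∂F/∂q ≤ 0 everywhere, and ∂F/∂r(r,p,q,t)·p² ≥ A whenever |p| ≥ P. Let u : ℝ × [0,T) → ℝ be continuous, with continuous partial derivatives u_t, u_x, u_{xx} on ℝ × (0,T), satisfying u_t = F(u_{xx},u_x,u,t), spatially periodic (u(x+L,t) = u(x,t)), and with osc_{x ∈ ℝ} u(x,t) ≤ M for every t. Then for every x ∈ ℝ and every t ∈ (0, min(T,T')): |u_x(x,t)| ≤ C₁·√t·(1+t)·exp(C₂/t). -/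

import Mathlib

/-!
The oscillation bound is turned into a modulus of continuity, uniform on `[t₁, t]` for `t₁ > 0`, by
doubling the space variable. Let `ψ(z, t)` be an increasing convex function of `z` with
`ψ(0, t) = 0` and `ψ_t < 2 A ψ_zz`, and suppose that `ψ(u(y, t) - u(x, t), t) - (y - x)` has a
positive maximum at some `x < y`. Then `ψ_z u_x = 1` at both points, so both gradients equal the
same `p`, and `p ≥ P` if `ψ_z ≤ 1 / P`. The second order conditions and `F_r p² ≥ A` give
`ψ_z (u_t(y) - u_t(x)) ≤ -2 A ψ_zz`, and the first order condition in time then reads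
`0 ≤ ψ_t - 2 A ψ_zz`, a contradiction. Periodicity keeps `x` in a compact set and forbids
`y = x + L`; a barrier which vanishes as `t → 0` forbids maxima near the initial time, whatever the
initial modulus of continuity is. So `ψ(u(y, t) - u(x, t), t) ≤ y - x`, and letting `y → x` bounds
`u_x` by `1 / ψ_z(0, t)`. The barrier used is `ψ = exp (-2 l M / t) (exp (l z / t) - 1)` with
`l = M / A`.
-/

open Set Filter Topology Function

theorem sub_mul_nonpos_of_isMaxOn_uIcc {f : ℝ → ℝ} {f' a b : ℝ} (hf : HasDerivAt f f' a)
    (hmax : IsMaxOn f (uIcc a b) a) : (b - a) * f' ≤ 0 := by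
  have hcone : b - a ∈ posTangentConeAt (uIcc a b) a :=
    sub_mem_posTangentConeAt_of_segment_subset (segment_eq_uIcc a b).subset
  simpa using hmax.localize.hasFDerivWithinAt_nonpos hf.hasFDerivAt.hasFDerivWithinAt hcone

theorem second_deriv_nonpos_of_isLocalMax {f f' : ℝ → ℝ} {f'' x : ℝ} (hmax : IsLocalMax f x)
    (hf : ∀ᶠ y in 𝓝 x, HasDerivAt f (f' y) y) (hf' : HasDerivAt f' f'' x) : f'' ≤ 0 := by
  by_contra! hpos
  have hderiv : deriv f =ᶠ[𝓝 x] f' := hf.mono fun _ hy => hy.deriv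
  have hmin : IsLocalMin f x :=
    isLocalMin_of_deriv_deriv_pos (by rwa [hderiv.deriv_eq, hf'.deriv]) hmax.deriv_eq_zero
      hf.self_of_nhds.continuousAt
  have hconst : f =ᶠ[𝓝 x] fun _ => f x := by
    filter_upwards [hmax, hmin] with y hy hy' using le_antisymm hy hy'
  have hzero : f' =ᶠ[𝓝 x] fun _ => 0 := hderiv.symm.trans (by simpa using hconst.deriv)
  exact hpos.ne' (by rw [← hf'.deriv, hzero.deriv_eq, deriv_const])

theorem first_second_order_of_isLocalMax_comp_sub_mul {φ φ' w w' : ℝ → ℝ} {φ'' w'' σ x : ℝ}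
    (hφ : ∀ z, HasDerivAt φ (φ' z) z) (hφ' : HasDerivAt φ' φ'' (w x))
    (hw : ∀ y, HasDerivAt w (w' y) y) (hw' : HasDerivAt w' w'' x)
    (hmax : IsLocalMax (fun y => φ (w y) - σ * y) x) :
    φ' (w x) * w' x = σ ∧ φ'' * w' x ^ 2 + φ' (w x) * w'' ≤ 0 := by
  have hfst (y : ℝ) : HasDerivAt (fun y => φ (w y) - σ * y) (φ' (w y) * w' y - σ) y :=
    ((hφ (w y)).comp y (hw y)).sub (by simpa using (hasDerivAt_id y).const_mul σ)
  have hsnd : HasDerivAt (fun y => φ' (w y) * w' y - σ)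
      (φ'' * w' x ^ 2 + φ' (w x) * w'') x :=
    (((hφ'.comp x (hw x)).mul hw').sub_const σ).congr_deriv (by rw [comp_apply]; ring)
  exact ⟨sub_eq_zero.1 (hmax.hasDerivAt_eq_zero (hfst x)),
    second_deriv_nonpos_of_isLocalMax hmax (.of_forall hfst) hsnd⟩

theorem exists_isMaxOn_univ_prod_of_periodic {α : Type*} [TopologicalSpace α] {K : Set α} {L : ℝ}
    {f : ℝ × α → ℝ} (hL : 0 < L) (hK : IsCompact K) (hK₀ : K.Nonempty)
    (hf : ContinuousOn f (univ ×ˢ K)) (hper : ∀ a ∈ K, Periodic (fun x => f (x, a)) L) :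
    ∃ c ∈ univ ×ˢ K, IsMaxOn f (univ ×ˢ K) c := by
  obtain ⟨c, hc, hmax⟩ := (isCompact_Icc.prod hK).exists_isMaxOn
    ((nonempty_Icc.2 hL.le).prod hK₀) (hf.mono (prod_mono_left (subset_univ (Icc 0 L))))
  refine ⟨c, ⟨trivial, hc.2⟩, fun ⟨x, a⟩ ⟨_, ha⟩ => ?_⟩
  obtain ⟨x', hx', hxx'⟩ := (hper a ha).exists_mem_Ico₀ hL x
  exact hxx'.trans_le (hmax (a := (x', a)) ⟨Ico_subset_Icc_self hx', ha⟩)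

/-- Parabolicity of `F(r, p, q, t)` at large gradients: for `|p| ≥ P` and `0 < t < T`, `F` is
nonincreasing in `q` and satisfies `∂F/∂r · p² ≥ A`. The latter is stated for difference quotients,
so that no differentiability of `F` is involved. -/
structure IsGradientParabolic (F : ℝ → ℝ → ℝ → ℝ → ℝ) (A P T : ℝ) : Prop where
  antitone : ∀ t ∈ Ioo 0 T, ∀ p, P ≤ |p| → ∀ r, Antitone fun q => F r p q t
  mul_sub_le : ∀ t ∈ Ioo 0 T, ∀ p, P ≤ |p| → ∀ q r₁ r₂, r₁ ≤ r₂ →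
    A * (r₂ - r₁) ≤ p ^ 2 * (F r₂ p q t - F r₁ p q t)

/-- `u` is a classical solution of `u_t = F(u_xx, u_x, u, t)` on `ℝ × (0, T)` which is `L`-periodic
in space; `ut`, `ux` and `uxx` are its partial derivatives. -/
structure IsPeriodicSolution (F : ℝ → ℝ → ℝ → ℝ → ℝ) (T L : ℝ) (u ut ux uxx : ℝ → ℝ → ℝ) :
    Prop where
  continuousOn : ContinuousOn (fun z : ℝ × ℝ => u z.1 z.2) (univ ×ˢ Ioo 0 T)
  hasDerivAt_time : ∀ x, ∀ t ∈ Ioo 0 T, HasDerivAt (fun s => u x s) (ut x t) t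
  hasDerivAt_space : ∀ x, ∀ t ∈ Ioo 0 T, HasDerivAt (fun y => u y t) (ux x t) x
  hasDerivAt_space_space : ∀ x, ∀ t ∈ Ioo 0 T, HasDerivAt (fun y => ux y t) (uxx x t) x
  equation : ∀ x, ∀ t ∈ Ioo 0 T, ut x t = F (uxx x t) (ux x t) (u x t) t
  periodic : ∀ t ∈ Ioo 0 T, Periodic (fun x => u x t) L

/-- `ψ(z, t)`, with partial derivatives `ψt`, `ψz` and `ψzz`, is a barrier for the modulus of
continuity of functions of oscillation at most `M`, on the time interval `(0, τ]`: a strict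
supersolution of `ψ_t = 2 A ψ_zz` on `0 < z ≤ M` that collapses at the initial time. -/
structure IsBarrier (ψ ψt ψz ψzz : ℝ → ℝ → ℝ) (A P M τ : ℝ) : Prop where
  hasFDerivAt : ∀ z, ∀ t ∈ Ioc 0 τ, HasFDerivAt (fun w : ℝ × ℝ => ψ w.1 w.2)
    (ψz z t • ContinuousLinearMap.fst ℝ ℝ ℝ + ψt z t • ContinuousLinearMap.snd ℝ ℝ ℝ) (z, t)
  hasDerivAt_slope : ∀ z, ∀ t ∈ Ioc 0 τ, HasDerivAt (fun y => ψz y t) (ψzz z t) z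
  zero_left : ∀ t ∈ Ioc 0 τ, ψ 0 t = 0
  slope_nonneg : ∀ z, ∀ t ∈ Ioc 0 τ, 0 ≤ ψz z t
  slope_mul_le_one : ∀ z ≤ M, ∀ t ∈ Ioc 0 τ, ψz z t * P ≤ 1
  convex : ∀ z, ∀ t ∈ Ioc 0 τ, 0 ≤ ψzz z t
  supersolution : ∀ z ∈ Ioc 0 M, ∀ t ∈ Ioc 0 τ, ψt z t < 2 * A * ψzz z t
  tendsto_zero : Tendsto (fun t => ψ M t) (𝓝[>] 0) (𝓝 0)

/-- The excess of `ψ(u(y, t) - u(x, t), t)` over `y - x`, which vanishes at `y = x` when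
`ψ(0, t) = 0`. The comparison principle says that it is nonpositive for `x ≤ y ≤ x + L`. -/
def barrierExcess (ψ u : ℝ → ℝ → ℝ) (x y t : ℝ) : ℝ :=
  ψ (u y t - u x t) t - (y - x)

section Comparison

variable {F : ℝ → ℝ → ℝ → ℝ → ℝ} {u ut ux uxx ψ ψt ψz ψzz : ℝ → ℝ → ℝ}
  {A P M T L τ t t₀ t₁ x y : ℝ}

namespace IsGradientParabolic

theorem of_hasDerivAt {Fr Fq : ℝ → ℝ → ℝ → ℝ → ℝ}
    (hFr : ∀ r p q, ∀ t ∈ Ioo 0 T, P ≤ |p| → HasDerivAt (fun r' => F r' p q t) (Fr r p q t) r)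
    (hFq : ∀ r p q, ∀ t ∈ Ioo 0 T, P ≤ |p| → HasDerivAt (fun q' => F r p q' t) (Fq r p q t) q)
    (hFq_nonpos : ∀ r p q, ∀ t ∈ Ioo 0 T, P ≤ |p| → Fq r p q t ≤ 0)
    (hFr_le : ∀ r p q, ∀ t ∈ Ioo 0 T, P ≤ |p| → A ≤ Fr r p q t * p ^ 2) :
    IsGradientParabolic F A P T where
  antitone t ht p hp r :=
    antitone_of_hasDerivAt_nonpos (fun q => hFq r p q t ht hp) fun q => hFq_nonpos r p q t ht hp
  mul_sub_le t ht p hp q r₁ r₂ hr := by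
    have hderiv (r : ℝ) :
        HasDerivAt (fun r => p ^ 2 * F r p q t) (p ^ 2 * Fr r p q t) r :=
      (hFr r p q t ht hp).const_mul _
    rw [mul_sub (p ^ 2)]
    refine mul_sub_le_image_sub_of_le_deriv (fun r => (hderiv r).differentiableAt) (fun r => ?_) hr
    rw [(hderiv r).deriv, mul_comm]
    exact hFr_le r p q t ht hp

theorem reflect (hF : IsGradientParabolic F A P T) :
    IsGradientParabolic (fun r p => F r (-p)) A P T where
  antitone t ht p hp := hF.antitone t ht (-p) (by rwa [abs_neg])
  mul_sub_le t ht p hp := by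
    simpa only [neg_sq] using hF.mul_sub_le t ht (-p) (by rwa [abs_neg])

theorem mul_sub_le_of_second_order (hF : IsGradientParabolic F A P T) (hA : 0 ≤ A)
    (ht : t ∈ Ioo 0 T) {a b p r₁ r₂ q₁ q₂ : ℝ} (ha : 0 < a) (hb : 0 ≤ b) (hp : p ≠ 0)
    (hpP : P ≤ |p|) (hq : q₁ ≤ q₂) (h₁ : b * p ^ 2 - a * r₁ ≤ 0) (h₂ : b * p ^ 2 + a * r₂ ≤ 0) :
    a * (F r₂ p q₂ t - F r₁ p q₁ t) ≤ -(2 * A * b) := by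
  have hgap : 2 * b * p ^ 2 ≤ a * (r₁ - r₂) := by linarith
  have hr : r₂ ≤ r₁ :=
    sub_nonneg.1 (nonneg_of_mul_nonneg_right ((by positivity : 0 ≤ 2 * b * p ^ 2).trans hgap) ha)
  have hanti : F r₂ p q₂ t ≤ F r₂ p q₁ t := hF.antitone t ht p hpP r₂ hq
  have hmono : p ^ 2 * (2 * A * b) ≤ p ^ 2 * (a * (F r₁ p q₁ t - F r₂ p q₁ t)) :=
    calc p ^ 2 * (2 * A * b) = A * (2 * b * p ^ 2) := by ring
      _ ≤ A * (a * (r₁ - r₂)) := by gcongr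
      _ = a * (A * (r₁ - r₂)) := by ring
      _ ≤ a * (p ^ 2 * (F r₁ p q₁ t - F r₂ p q₁ t)) := by
        gcongr ?_ * ?_
        exact hF.mul_sub_le t ht p hpP q₁ r₂ r₁ hr
      _ = p ^ 2 * (a * (F r₁ p q₁ t - F r₂ p q₁ t)) := by ring
  calc a * (F r₂ p q₂ t - F r₁ p q₁ t) ≤ a * (F r₂ p q₁ t - F r₁ p q₁ t) := by gcongr
    _ = -(a * (F r₁ p q₁ t - F r₂ p q₁ t)) := by ring
    _ ≤ -(2 * A * b) := neg_le_neg (le_of_mul_le_mul_left hmono (by positivity))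

end IsGradientParabolic

namespace IsPeriodicSolution

theorem reflect (hu : IsPeriodicSolution F T L u ut ux uxx) :
    IsPeriodicSolution (fun r p => F r (-p)) T L (fun x => u (-x)) (fun x => ut (-x))
      (fun x t => -ux (-x) t) (fun x => uxx (-x)) where
  continuousOn := hu.continuousOn.comp (f := fun z : ℝ × ℝ => (-z.1, z.2)) (by fun_prop)
    fun _ hz => ⟨trivial, hz.2⟩
  hasDerivAt_time x := hu.hasDerivAt_time (-x)
  hasDerivAt_space x t ht :=
    ((hu.hasDerivAt_space (-x) t ht).comp x (hasDerivAt_neg x)).congr_deriv (by ring)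
  hasDerivAt_space_space x t ht :=
    ((hu.hasDerivAt_space_space (-x) t ht).comp x (hasDerivAt_neg x)).neg.congr_deriv (by ring)
  equation x t ht := by simpa only [neg_neg] using hu.equation (-x) t ht
  periodic t ht x := by
    simpa only [neg_add, sub_eq_add_neg] using (hu.periodic t ht).sub_eq (-x)

end IsPeriodicSolution

namespace IsBarrier

theorem hasDerivAt (hψ : IsBarrier ψ ψt ψz ψzz A P M τ) (ht : t ∈ Ioc 0 τ) (z : ℝ) :
    HasDerivAt (fun y => ψ y t) (ψz z t) z := by
  have hline : HasDerivAt (fun y => (y, t)) (1, 0) z :=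
    (hasDerivAt_id z).prodMk (hasDerivAt_const z t)
  exact ((hψ.hasFDerivAt z t ht).comp_hasDerivAt_of_eq z hline rfl).congr_deriv (by simp)

theorem monotone (hψ : IsBarrier ψ ψt ψz ψzz A P M τ) (ht : t ∈ Ioc 0 τ) :
    Monotone fun z => ψ z t :=
  monotone_of_hasDerivAt_nonneg (hψ.hasDerivAt ht) fun z => hψ.slope_nonneg z t ht

theorem hasDerivAt_barrierExcess_space (hψ : IsBarrier ψ ψt ψz ψzz A P M τ)
    (hu : IsPeriodicSolution F T L u ut ux uxx) (ht : t ∈ Ioo 0 T) (htτ : t ≤ τ) (x y : ℝ) :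
    HasDerivAt (fun y => barrierExcess ψ u x y t) (ψz (u y t - u x t) t * ux y t - 1) y :=
  ((hψ.hasDerivAt ⟨ht.1, htτ⟩ _).comp y ((hu.hasDerivAt_space y t ht).sub_const _)).sub
    ((hasDerivAt_id y).sub_const x)

theorem hasDerivAt_barrierExcess_time (hψ : IsBarrier ψ ψt ψz ψzz A P M τ)
    (hu : IsPeriodicSolution F T L u ut ux uxx) (ht : t ∈ Ioo 0 T) (htτ : t ≤ τ) (x y : ℝ) :
    HasDerivAt (fun s => barrierExcess ψ u x y s)
      (ψz (u y t - u x t) t * (ut y t - ut x t) + ψt (u y t - u x t) t) t := by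
  have hcurve : HasDerivAt (fun s => (u y s - u x s, s)) (ut y t - ut x t, 1) t :=
    ((hu.hasDerivAt_time y t ht).sub (hu.hasDerivAt_time x t ht)).prodMk (hasDerivAt_id t)
  exact (((hψ.hasFDerivAt _ t ⟨ht.1, htτ⟩).comp_hasDerivAt_of_eq t hcurve rfl).sub_const
    (y - x)).congr_deriv (by simp)

theorem slope_mul_sub_le_of_isLocalMax (hψ : IsBarrier ψ ψt ψz ψzz A P M τ)
    (hF : IsGradientParabolic F A P T) (hu : IsPeriodicSolution F T L u ut ux uxx) (hA : 0 ≤ A)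
    (ht : t ∈ Ioo 0 T) (htτ : t ≤ τ) (hle : u x t ≤ u y t) (hM : u y t - u x t ≤ M)
    (hmax_left : IsLocalMax (fun x => barrierExcess ψ u x y t) x)
    (hmax_right : IsLocalMax (fun y => barrierExcess ψ u x y t) y) :
    ψz (u y t - u x t) t * (ut y t - ut x t) ≤ -(2 * A * ψzz (u y t - u x t) t) := by
  have htI : t ∈ Ioc 0 τ := ⟨ht.1, htτ⟩
  have hmax_right' : IsLocalMax (fun y' => ψ (u y' t - u x t) t - 1 * y') y :=
    hmax_right.mono fun y' hy' => by
      simp only [barrierExcess] at hy'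
      linarith
  have hmax_left' : IsLocalMax (fun x' => ψ (u y t - u x' t) t - -1 * x') x :=
    hmax_left.mono fun x' hx' => by
      simp only [barrierExcess] at hx'
      linarith
  set z := u y t - u x t
  obtain ⟨hfst_right, hsnd_right⟩ :
      ψz z t * ux y t = 1 ∧ ψzz z t * ux y t ^ 2 + ψz z t * uxx y t ≤ 0 :=
    first_second_order_of_isLocalMax_comp_sub_mul
      (hψ.hasDerivAt htI) (hψ.hasDerivAt_slope _ t htI)
      (fun y' => (hu.hasDerivAt_space y' t ht).sub_const (u x t))
      (hu.hasDerivAt_space_space y t ht) hmax_right'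
  obtain ⟨hfst_left, hsnd_left⟩ :
      ψz z t * -ux x t = -1 ∧ ψzz z t * (-ux x t) ^ 2 + ψz z t * -uxx x t ≤ 0 :=
    first_second_order_of_isLocalMax_comp_sub_mul
      (hψ.hasDerivAt htI) (hψ.hasDerivAt_slope _ t htI)
      (fun x' => (hu.hasDerivAt_space x' t ht).const_sub (u y t))
      (hu.hasDerivAt_space_space x t ht).neg hmax_left'
  have hslope : 0 < ψz z t :=
    (hψ.slope_nonneg z t htI).lt_of_ne' (left_ne_zero_of_mul_eq_one hfst_right)
  have hux : ux x t = ux y t := mul_left_cancel₀ hslope.ne' (by linarith)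
  have hP : P ≤ |ux y t| :=
    (le_of_mul_le_mul_left (hfst_right ▸ hψ.slope_mul_le_one z hM t htI) hslope).trans
      (le_abs_self _)
  rw [hu.equation y t ht, hu.equation x t ht, hux]
  rw [hux, neg_sq] at hsnd_left
  exact hF.mul_sub_le_of_second_order hA ht hslope (hψ.convex z t htI)
    (right_ne_zero_of_mul_eq_one hfst_right) hP hle (by linarith) hsnd_right

theorem exists_isMax_barrierExcess (hψ : IsBarrier ψ ψt ψz ψzz A P M τ)
    (hu : IsPeriodicSolution F T L u ut ux uxx) (hL : 0 < L) (ht₁ : 0 < t₁) (ht₁₀ : t₁ ≤ t₀)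
    (ht₀T : t₀ < T) (ht₀τ : t₀ ≤ τ) :
    ∃ x y t, y ∈ Icc x (x + L) ∧ t ∈ Icc t₁ t₀ ∧ ∀ x' y' t', y' ∈ Icc x' (x' + L) →
      t' ∈ Icc t₁ t₀ → barrierExcess ψ u x' y' t' ≤ barrierExcess ψ u x y t := by
  have hT {s : ℝ} (hs : s ∈ Icc t₁ t₀) : s ∈ Ioo 0 T := ⟨ht₁.trans_le hs.1, hs.2.trans_lt ht₀T⟩
  have hτ {s : ℝ} (hs : s ∈ Icc t₁ t₀) : s ∈ Ioc 0 τ := ⟨ht₁.trans_le hs.1, hs.2.trans ht₀τ⟩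
  have hcont : ContinuousOn
      (fun z : ℝ × ℝ × ℝ => barrierExcess ψ u z.1 (z.1 + z.2.1) z.2.2)
      (univ ×ˢ Icc 0 L ×ˢ Icc t₁ t₀) := by
    have hu_right := hu.continuousOn.comp (s := univ ×ˢ Icc 0 L ×ˢ Icc t₁ t₀)
      (f := fun z : ℝ × ℝ × ℝ => (z.1 + z.2.1, z.2.2)) (by fun_prop)
      fun _ hz => ⟨trivial, hT hz.2.2⟩
    have hu_left := hu.continuousOn.comp (s := univ ×ˢ Icc 0 L ×ˢ Icc t₁ t₀)
      (f := fun z : ℝ × ℝ × ℝ => (z.1, z.2.2)) (by fun_prop) fun _ hz => ⟨trivial, hT hz.2.2⟩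
    have hψ_cont : ContinuousOn (fun w : ℝ × ℝ => ψ w.1 w.2) (univ ×ˢ Icc t₁ t₀) :=
      fun w hw => (hψ.hasFDerivAt w.1 w.2 (hτ hw.2)).continuousAt.continuousWithinAt
    exact (hψ_cont.comp ((hu_right.sub hu_left).prodMk (by fun_prop))
      fun _ hz => ⟨trivial, hz.2.2⟩).sub (by fun_prop)
  have hper : ∀ a ∈ Icc 0 L ×ˢ Icc t₁ t₀,
      Periodic (fun x => barrierExcess ψ u x (x + a.1) a.2) L := fun a ha x => by
    have hux (x : ℝ) : u (x + L) a.2 = u x a.2 := hu.periodic a.2 (hT ha.2) x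
    simp only [barrierExcess, add_right_comm x L, hux, add_sub_cancel_left,
      add_sub_add_right_eq_sub]
  obtain ⟨⟨x, d, t⟩, ⟨-, hd, ht⟩, hmax⟩ := exists_isMaxOn_univ_prod_of_periodic hL
    (isCompact_Icc.prod isCompact_Icc)
    ((nonempty_Icc.2 hL.le).prod (nonempty_Icc.2 ht₁₀)) hcont hper
  refine ⟨x, x + d, t, ⟨by linarith [hd.1], by linarith [hd.2]⟩, ht, fun x' y' t' hy' ht' => ?_⟩
  simpa using hmax (a := (x', y' - x', t'))
    ⟨trivial, ⟨by linarith [hy'.1], by linarith [hy'.2]⟩, ht'⟩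

theorem lt_of_barrierExcess_pos (hψ : IsBarrier ψ ψt ψz ψzz A P M τ) (ht : t ∈ Ioc 0 τ)
    (hxy : x ≤ y) (hpos : 0 < barrierExcess ψ u x y t) : u x t < u y t := by
  by_contra! hle
  have hψ_nonpos : ψ (u y t - u x t) t ≤ 0 :=
    (hψ.monotone ht (sub_nonpos.2 hle)).trans_eq (hψ.zero_left t ht)
  simp only [barrierExcess] at hpos
  linarith

theorem barrierExcess_nonpos_of_isMax (hψ : IsBarrier ψ ψt ψz ψzz A P M τ)
    (hF : IsGradientParabolic F A P T) (hu : IsPeriodicSolution F T L u ut ux uxx) (hA : 0 ≤ A)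
    (ht : t ∈ Ioo 0 T) (htτ : t ≤ τ) (ht₁ : t₁ < t) (hxy : y ∈ Icc x (x + L))
    (hM : u y t - u x t ≤ M)
    (hmax : ∀ x' y' t', y' ∈ Icc x' (x' + L) → t' ∈ Icc t₁ t →
      barrierExcess ψ u x' y' t' ≤ barrierExcess ψ u x y t) : barrierExcess ψ u x y t ≤ 0 := by
  by_contra! hpos
  have htI : t ∈ Ioc 0 τ := ⟨ht.1, htτ⟩
  have htt₁ : t ∈ Icc t₁ t := right_mem_Icc.2 ht₁.le
  have hlt : u x t < u y t := hψ.lt_of_barrierExcess_pos htI hxy.1 hpos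
  have hx_lt : x < y := hxy.1.lt_of_ne fun h => hlt.ne (by rw [h])
  have hy_lt : y < x + L := hxy.2.lt_of_ne fun h => hlt.ne' (by rw [h]; exact hu.periodic t ht x)
  have hspace : ψz (u y t - u x t) t * (ut y t - ut x t) ≤ -(2 * A * ψzz (u y t - u x t) t) := by
    refine hψ.slope_mul_sub_le_of_isLocalMax hF hu hA ht htτ hlt.le hM ?_ ?_
    · filter_upwards [Ioo_mem_nhds (sub_lt_iff_lt_add.2 hy_lt) hx_lt] with x' hx'
      exact hmax x' y t ⟨hx'.2.le, (sub_lt_iff_lt_add.1 hx'.1).le⟩ htt₁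
    · filter_upwards [Ioo_mem_nhds hx_lt hy_lt] with y' hy'
      exact hmax x y' t (Ioo_subset_Icc_self hy') htt₁
  have htime : 0 ≤ ψz (u y t - u x t) t * (ut y t - ut x t) + ψt (u y t - u x t) t := by
    refine nonneg_of_mul_nonpos_right (sub_mul_nonpos_of_isMaxOn_uIcc
      (hψ.hasDerivAt_barrierExcess_time hu ht htτ x y) fun s hs => ?_) (sub_neg.2 ht₁)
    rw [uIcc_of_ge ht₁.le] at hs
    exact hmax x y s hxy hs
  linarith [hψ.supersolution _ ⟨sub_pos.2 hlt, hM⟩ t htI]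

theorem barrierExcess_nonpos (hψ : IsBarrier ψ ψt ψz ψzz A P M τ)
    (hF : IsGradientParabolic F A P T) (hu : IsPeriodicSolution F T L u ut ux uxx) (hA : 0 ≤ A)
    (hL : 0 < L) (hosc : ∀ t ∈ Ioo 0 T, ∀ x y, u x t - u y t ≤ M) (ht₀ : t₀ ∈ Ioo 0 T)
    (ht₀τ : t₀ ≤ τ) (hxy : y ∈ Icc x (x + L)) : barrierExcess ψ u x y t₀ ≤ 0 := by
  by_contra! hpos
  obtain ⟨t₁, hψt₁, ht₁⟩ := ((hψ.tendsto_zero.eventually_lt_const hpos).and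
    (Ioo_mem_nhdsGT ht₀.1)).exists
  obtain ⟨x', y', t, hxy', ht, hmax⟩ :=
    hψ.exists_isMax_barrierExcess hu hL ht₁.1 ht₁.2.le ht₀.2 ht₀τ
  have hexcess : barrierExcess ψ u x y t₀ ≤ barrierExcess ψ u x' y' t :=
    hmax x y t₀ hxy (right_mem_Icc.2 ht₁.2.le)
  have htT : t ∈ Ioo 0 T := ⟨ht₁.1.trans_le ht.1, ht.2.trans_lt ht₀.2⟩
  have htτ : t ≤ τ := ht.2.trans ht₀τ
  have ht₁t : t₁ < t := by
    refine ht.1.lt_of_ne fun h => ?_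
    have hψ_le : ψ (u y' t - u x' t) t ≤ ψ M t := hψ.monotone ⟨htT.1, htτ⟩ (hosc t htT y' x')
    rw [h] at hψt₁
    simp only [barrierExcess] at hexcess hψt₁
    linarith [hxy'.1]
  exact (hpos.trans_le hexcess).not_ge (hψ.barrierExcess_nonpos_of_isMax hF hu hA htT htτ ht₁t
    hxy' (hosc t htT y' x') fun x y s hxy hs => hmax x y s hxy ⟨hs.1, hs.2.trans ht.2⟩)

theorem slope_zero_mul_le_one (hψ : IsBarrier ψ ψt ψz ψzz A P M τ)
    (hF : IsGradientParabolic F A P T) (hu : IsPeriodicSolution F T L u ut ux uxx) (hA : 0 ≤ A)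
    (hL : 0 < L) (hosc : ∀ t ∈ Ioo 0 T, ∀ x y, u x t - u y t ≤ M) (ht : t ∈ Ioo 0 T)
    (htτ : t ≤ τ) (x : ℝ) : ψz 0 t * ux x t ≤ 1 := by
  have hexcess : barrierExcess ψ u x x t = 0 := by
    rw [barrierExcess, sub_self, sub_self, sub_zero, hψ.zero_left t ⟨ht.1, htτ⟩]
  have hle := sub_mul_nonpos_of_isMaxOn_uIcc (b := x + L)
    (hψ.hasDerivAt_barrierExcess_space hu ht htτ x x) fun y hy => by
      rw [uIcc_of_le (by linarith)] at hy
      exact (hψ.barrierExcess_nonpos hF hu hA hL hosc ht htτ hy).trans_eq hexcess.symm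
  rw [add_sub_cancel_left, sub_self] at hle
  exact sub_nonpos.1 (nonpos_of_mul_nonpos_right hle hL)

theorem slope_zero_mul_abs_le_one (hψ : IsBarrier ψ ψt ψz ψzz A P M τ)
    (hF : IsGradientParabolic F A P T) (hu : IsPeriodicSolution F T L u ut ux uxx) (hA : 0 ≤ A)
    (hL : 0 < L) (hosc : ∀ t ∈ Ioo 0 T, ∀ x y, u x t - u y t ≤ M) (ht : t ∈ Ioo 0 T)
    (htτ : t ≤ τ) (x : ℝ) : ψz 0 t * |ux x t| ≤ 1 := by
  have hupper : ψz 0 t * ux x t ≤ 1 := hψ.slope_zero_mul_le_one hF hu hA hL hosc ht htτ x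
  have hlower : ψz 0 t * -ux x t ≤ 1 := by
    simpa only [neg_neg] using hψ.slope_zero_mul_le_one hF.reflect hu.reflect hA hL
      (fun s hs x y => hosc s hs (-x) (-y)) ht htτ (-x)
  rcases abs_choice (ux x t) with h | h <;> rwa [h]

end IsBarrier

end Comparison

/-- The barrier `ψ(z, t) = exp (-2 l M / t) (exp (l z / t) - 1)`. The factor `exp (-2 l M / t)`
makes it, and its slope, small on `z ≤ M` for short times. -/
noncomputable def expBarrier (l M z t : ℝ) : ℝ :=
  Real.exp (-(2 * l * M / t)) * (Real.exp (l * z / t) - 1)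

section ExpBarrier

variable {l M A P τ t z : ℝ}

theorem hasFDerivAt_expBarrier (ht : t ≠ 0) :
    HasFDerivAt (fun w : ℝ × ℝ => expBarrier l M w.1 w.2)
      ((Real.exp (-(2 * l * M / t)) * Real.exp (l * z / t) * (l / t)) •
          ContinuousLinearMap.fst ℝ ℝ ℝ +
        (Real.exp (-(2 * l * M / t)) * (2 * l * M * (Real.exp (l * z / t) - 1) -
          l * z * Real.exp (l * z / t)) / t ^ 2) • ContinuousLinearMap.snd ℝ ℝ ℝ) (z, t) := by
  have hfst : HasFDerivAt (fun w : ℝ × ℝ => w.1) (ContinuousLinearMap.fst ℝ ℝ ℝ) (z, t) :=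
    hasFDerivAt_fst
  have hsnd : HasFDerivAt (fun w : ℝ × ℝ => w.2) (ContinuousLinearMap.snd ℝ ℝ ℝ) (z, t) :=
    hasFDerivAt_snd
  have hinv := (hasDerivAt_inv ht).comp_hasFDerivAt (z, t) hsnd
  refine (((hinv.const_mul (2 * l * M)).neg.exp).mul
    (((hfst.const_mul l).mul hinv).exp.sub_const 1)).congr_fderiv ?_
  ext <;> simp [div_eq_mul_inv] <;> ring

theorem tendsto_exp_neg_div_nhdsGT_zero {c : ℝ} (hc : 0 < c) :
    Tendsto (fun t : ℝ => Real.exp (-(c / t))) (𝓝[>] 0) (𝓝 0) :=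
  Real.tendsto_exp_neg_atTop_nhds_zero.comp (tendsto_inv_nhdsGT_zero.const_mul_atTop hc)

theorem tendsto_expBarrier_nhdsGT_zero (hl : 0 < l) (hM : 0 < M) :
    Tendsto (fun t => expBarrier l M M t) (𝓝[>] 0) (𝓝 0) := by
  have hlim := (tendsto_exp_neg_div_nhdsGT_zero (mul_pos hl hM)).sub
    (tendsto_exp_neg_div_nhdsGT_zero (c := 2 * l * M) (by positivity))
  rw [sub_self] at hlim
  refine hlim.congr fun t => ?_
  rw [expBarrier, mul_sub_one, ← Real.exp_add]
  ring_nf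

theorem expBarrier_slope_mul_le_one (hl : 0 < l) (hM : 0 < M) (ht : 0 < t)
    (htP : 2 * t * P ≤ l * M ^ 2) (hz : z ≤ M) :
    Real.exp (-(2 * l * M / t)) * Real.exp (l * z / t) * (l / t) * P ≤ 1 := by
  set s := l * M / t with hs
  have hs_pos : 0 < s := by positivity
  have hslope : l / t * P ≤ Real.exp s :=
    calc l / t * P = (2 * t * P) * (l / (2 * t ^ 2)) := by field_simp
      _ ≤ (l * M ^ 2) * (l / (2 * t ^ 2)) := by gcongr
      _ = s ^ 2 / 2 := by rw [hs]; field_simp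
      _ ≤ Real.exp s := by linarith [Real.quadratic_le_exp_of_nonneg hs_pos.le]
  calc Real.exp (-(2 * l * M / t)) * Real.exp (l * z / t) * (l / t) * P
      = Real.exp (-(2 * l * M / t)) * Real.exp (l * z / t) * (l / t * P) := by ring
    _ ≤ Real.exp (-(2 * l * M / t)) * Real.exp (l * z / t) * Real.exp s := by gcongr
    _ ≤ Real.exp (-(2 * l * M / t)) * Real.exp s * Real.exp s := by rw [hs]; gcongr
    _ = 1 := by
      rw [← Real.exp_add, ← Real.exp_add, Real.exp_eq_one_iff, hs]
      ring

theorem isBarrier_expBarrier (hM : 0 < M) (hl : 0 < l) (hlA : M ≤ A * l)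
    (hP : 0 ≤ P) (hτ : 2 * τ * P ≤ l * M ^ 2) :
    IsBarrier (expBarrier l M)
      (fun z t => Real.exp (-(2 * l * M / t)) * (2 * l * M * (Real.exp (l * z / t) - 1) -
        l * z * Real.exp (l * z / t)) / t ^ 2)
      (fun z t => Real.exp (-(2 * l * M / t)) * Real.exp (l * z / t) * (l / t))
      (fun z t => Real.exp (-(2 * l * M / t)) * Real.exp (l * z / t) * (l / t) ^ 2)
      A P M τ where
  hasFDerivAt z t ht := hasFDerivAt_expBarrier ht.1.ne'
  hasDerivAt_slope z t _ :=
    ((((((hasDerivAt_id z).const_mul l).div_const t).exp).const_mul _).mul_const _).congr_deriv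
      (by simp only [id]; ring)
  zero_left t _ := by simp [expBarrier]
  slope_nonneg z t ht := by
    have := ht.1
    positivity
  slope_mul_le_one z hz t ht := by
    refine expBarrier_slope_mul_le_one hl hM ht.1 (le_trans ?_ hτ) hz
    have := ht.2
    gcongr
  convex z t _ := by positivity
  supersolution z hz t ht := by
    have ht_pos := ht.1
    have hz_pos := hz.1
    set e := Real.exp (l * z / t)
    have : 0 < e := Real.exp_pos _
    have hlz : 0 < l * z * e := by positivity
    have hbracket : 2 * l * M * (e - 1) - l * z * e < 2 * A * l ^ 2 * e := by
      have : 2 * l * M * e ≤ 2 * l * (A * l) * e := by gcongr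
      linarith [mul_pos hl hM]
    calc Real.exp (-(2 * l * M / t)) * (2 * l * M * (e - 1) - l * z * e) / t ^ 2
        < Real.exp (-(2 * l * M / t)) * (2 * A * l ^ 2 * e) / t ^ 2 := by gcongr
      _ = 2 * A * (Real.exp (-(2 * l * M / t)) * e * (l / t) ^ 2) := by ring
  tendsto_zero := tendsto_expBarrier_nhdsGT_zero hl hM

end ExpBarrier

theorem IsPeriodicSolution.abs_deriv_space_le {F : ℝ → ℝ → ℝ → ℝ → ℝ} {u ut ux uxx : ℝ → ℝ → ℝ}
    {M A P T L t : ℝ} (hu : IsPeriodicSolution F T L u ut ux uxx)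
    (hF : IsGradientParabolic F A P T) (hM : 0 < M) (hA : 0 < A) (hP : 0 ≤ P) (hL : 0 < L)
    (hosc : ∀ t ∈ Ioo 0 T, ∀ x y, u x t - u y t ≤ M) (ht : t ∈ Ioo 0 T)
    (htP : 2 * A * t * P ≤ M ^ 3) (x : ℝ) :
    |ux x t| ≤ A / M * t * Real.exp (2 * M ^ 2 / A / t) := by
  have ht_pos := ht.1
  have hbarrier := isBarrier_expBarrier (l := M / A) (A := A) (P := P) (τ := t) hM (by positivity)
    (mul_div_cancel₀ M hA.ne').ge hP
    (by rw [div_mul_eq_mul_div, le_div_iff₀ hA]; linarith)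
  have hslope := hbarrier.slope_zero_mul_abs_le_one hF hu hA.le hL hosc ht le_rfl x
  have hslope_zero : Real.exp (-(2 * (M / A) * M / t)) * Real.exp (M / A * 0 / t) * (M / A / t) =
      (A / M * t * Real.exp (2 * M ^ 2 / A / t))⁻¹ := by
    rw [mul_zero, zero_div, Real.exp_zero, mul_one, mul_inv, ← Real.exp_neg]
    field_simp
  rwa [hslope_zero, inv_mul_le_one₀ (by positivity)] at hslope

theorem le_sqrt_mul_one_add {t : ℝ} (ht : 0 ≤ t) : t ≤ √t * (1 + t) := by
  have hsqrt : √t ≤ 1 + t := by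
    rw [Real.sqrt_le_left (by positivity)]
    nlinarith
  calc t = √t * √t := (Real.mul_self_sqrt ht).symm
    _ ≤ √t * (1 + t) := by gcongr

theorem periodic_gradient_estimate_fully_nonlinear_general {M A P : ℝ} (hM : 0 < M) (hA : 0 < A)
    (hP : 0 < P) :
    ∃ T' C₁ C₂ : ℝ, 0 < T' ∧ 0 < C₁ ∧ 0 < C₂ ∧
      ∀ {T L : ℝ} {F : ℝ → ℝ → ℝ → ℝ → ℝ} {u ut ux uxx : ℝ → ℝ → ℝ}, 0 < L →
      IsGradientParabolic F A P T → IsPeriodicSolution F T L u ut ux uxx →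
      (∀ t ∈ Ioo 0 T, ∀ x y, u x t - u y t ≤ M) →
      ∀ x, ∀ t ∈ Ioo 0 (min T T'), |ux x t| ≤ C₁ * √t * (1 + t) * Real.exp (C₂ / t) := by
  refine ⟨M ^ 3 / (2 * A * P), A / M, 2 * M ^ 2 / A, by positivity, by positivity, by positivity,
    fun hL hF hu hosc x t ht => ?_⟩
  obtain ⟨htT, htT'⟩ := lt_min_iff.1 ht.2
  have htP : 2 * A * t * P ≤ M ^ 3 := by
    rw [lt_div_iff₀ (by positivity)] at htT'
    linarith
  refine (hu.abs_deriv_space_le hF hM hA hP.le hL hosc ⟨ht.1, htT⟩ htP x).trans ?_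
  rw [mul_assoc (A / M) (√t)]
  gcongr
  exact le_sqrt_mul_one_add ht.1.le

/-- Short-time gradient estimate for periodic solutions of the
fully nonlinear equation `u_t = F(u_{xx},u_x,u,t)` with `F_r > 0`, `F_q ≤ 0`,
and the degeneracy control `F_r · p² ≥ A` for `|p| ≥ P`. -/
theorem periodic_gradient_estimate_fully_nonlinear :
    ∀ M A P : ℝ, 0 < M → 0 < A → 0 < P →
    ∃ T' C₁ C₂ : ℝ, 0 < T' ∧ 0 < C₁ ∧ 0 < C₂ ∧
      ∀ (T L : ℝ), 0 < T → 0 < L →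
      ∀ (F Fr Fq : ℝ → ℝ → ℝ → ℝ → ℝ) (u ut ux uxx : ℝ → ℝ → ℝ),
      ContDiffOn ℝ 1 (fun z : ℝ × ℝ × ℝ × ℝ => F z.1 z.2.1 z.2.2.1 z.2.2.2)
        (Set.univ ×ˢ Set.univ ×ˢ Set.univ ×ˢ Set.Icc 0 T) →
      (∀ r p q : ℝ, ∀ t ∈ Set.Icc (0:ℝ) T,
        HasDerivAt (fun r' => F r' p q t) (Fr r p q t) r) →
      (∀ r p q : ℝ, ∀ t ∈ Set.Icc (0:ℝ) T,
        HasDerivAt (fun q' => F r p q' t) (Fq r p q t) q) →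
      (∀ r p q : ℝ, ∀ t ∈ Set.Icc (0:ℝ) T, 0 < Fr r p q t) →
      (∀ r p q : ℝ, ∀ t ∈ Set.Icc (0:ℝ) T, Fq r p q t ≤ 0) →
      (∀ r p q : ℝ, ∀ t ∈ Set.Icc (0:ℝ) T, P ≤ |p| → A ≤ Fr r p q t * p ^ 2) →
      ContinuousOn (fun z : ℝ × ℝ => u z.1 z.2) (Set.univ ×ˢ Set.Ico 0 T) →
      (∀ x : ℝ, ∀ t ∈ Set.Ioo (0:ℝ) T, HasDerivAt (fun s => u x s) (ut x t) t) →
      (∀ x : ℝ, ∀ t ∈ Set.Ioo (0:ℝ) T, HasDerivAt (fun y => u y t) (ux x t) x) →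
      (∀ x : ℝ, ∀ t ∈ Set.Ioo (0:ℝ) T, HasDerivAt (fun y => ux y t) (uxx x t) x) →
      ContinuousOn (fun z : ℝ × ℝ => ut z.1 z.2) (Set.univ ×ˢ Set.Ioo 0 T) →
      ContinuousOn (fun z : ℝ × ℝ => ux z.1 z.2) (Set.univ ×ˢ Set.Ioo 0 T) →
      ContinuousOn (fun z : ℝ × ℝ => uxx z.1 z.2) (Set.univ ×ˢ Set.Ioo 0 T) →
      (∀ x : ℝ, ∀ t ∈ Set.Ioo (0:ℝ) T,
        ut x t = F (uxx x t) (ux x t) (u x t) t) →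
      (∀ x t : ℝ, u (x + L) t = u x t) →
      (∀ t ∈ Set.Ico (0:ℝ) T, ∀ x y : ℝ, u x t - u y t ≤ M) →
      ∀ x : ℝ, ∀ t ∈ Set.Ioo (0:ℝ) (min T T'),
        |ux x t| ≤ C₁ * Real.sqrt t * (1 + t) * Real.exp (C₂ / t) := by
  intro M A P hM hA hP
  obtain ⟨T', C₁, C₂, hT', hC₁, hC₂, hbound⟩ :=
    periodic_gradient_estimate_fully_nonlinear_general hM hA hP
  exact ⟨T', C₁, C₂, hT', hC₁, hC₂, fun T L _ hL F Fr Fq u ut ux uxx _ hFr hFq _ hFq_nonpos hFr_le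
    hu hut hux huxx _ _ _ heq hper hosc => hbound hL
      (.of_hasDerivAt (fun r p q t ht _ => hFr r p q t (Ioo_subset_Icc_self ht))
        (fun r p q t ht _ => hFq r p q t (Ioo_subset_Icc_self ht))
        (fun r p q t ht _ => hFq_nonpos r p q t (Ioo_subset_Icc_self ht))
        fun r p q t ht => hFr_le r p q t (Ioo_subset_Icc_self ht))
      ⟨hu.mono (prod_mono_right Ioo_subset_Ico_self), hut, hux, huxx, heq, fun t _ x => hper x t⟩
      fun t ht => hosc t (Ioo_subset_Ico_self ht)⟩
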